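/- Let σ be the ℚ-algebra automorphism of the polynomial ring ℚ[x₁, x₂, x₃] that cyclically permutes the variables (x₁ ↦ x₂ ↦ x₃ ↦ x₁), giving an action of the cyclic group ℤ/3 on ℚ[x₁, x₂, x₃]. Then the ring of invariants ℚ[x₁, x₂, x₃]^{ℤ/3} is not a polynomial ring: for no m ≥ 0 is it isomorphic as a ℚ-algebra to a polynomial ring ℚ[y₁, …, y_m] in m variables. -/

import Mathlib

open MvPolynomial

/-!
The ring of invariants `A` of a three-cycle lies in a polynomial ring in three variables. Comparing
transcendence degrees, a polynomial ring isomorphic to `A` has at most three variables, so its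
tangent spaces have rank at most three. But the tangent space of `A` at the origin contains four
linearly independent vectors, dual to the orbit sums of `x₀`, `x₀x₁`, `x₀²x₂` and `x₀x₁x₂`. These
vectors are combinations of coefficients that vanish on products of invariants without constant
term; using coefficients instead of derivatives makes the argument independent of the
characteristic.
-/

section TangentSpace

variable {R A : Type*} [CommRing R] [CommRing A] [Algebra R A]

/-- The Zariski tangent space of `A` at the `R`-point `ε`, as the module of `R`-linear point
derivations of `A` at `ε`. -/
def tangentSpace (ε : A →ₐ[R] R) : Submodule R (Module.Dual R A) where
  carrier := {D | ∀ a b, D (a * b) = ε a * D b + ε b * D a}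
  add_mem' {D D'} hD hD' a b := by simp only [LinearMap.add_apply, hD a b, hD' a b]; ring
  zero_mem' a b := by simp
  smul_mem' c D hD a b := by simp only [LinearMap.smul_apply, smul_eq_mul, hD a b]; ring

variable {ε : A →ₐ[R] R} {D : Module.Dual R A}

theorem apply_one_of_mem_tangentSpace (hD : D ∈ tangentSpace ε) : D 1 = 0 := by
  simpa using hD 1 1

theorem eq_zero_of_mem_tangentSpace {s : Set A} (hs : Algebra.adjoin R s = ⊤)
    (hD : D ∈ tangentSpace ε) (hDs : ∀ a ∈ s, D a = 0) : D = 0 := by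
  ext a
  have ha : a ∈ Algebra.adjoin R s := hs ▸ Algebra.mem_top
  induction ha using Algebra.adjoin_induction with
  | mem a ha => exact hDs a ha
  | algebraMap r => simp [Algebra.algebraMap_eq_smul_one, apply_one_of_mem_tangentSpace hD]
  | add a b _ _ ha hb => simp [ha, hb]
  | mul a b _ _ ha hb => simp [hD a b, ha, hb]

theorem card_le_card_of_linearIndependent_tangentSpace [Nontrivial R] {ι σ : Type*} [Fintype ι]
    [Fintype σ] {x : σ → A} (hx : Algebra.adjoin R (Set.range x) = ⊤) {v : ι → Module.Dual R A}
    (hv : ∀ i, v i ∈ tangentSpace ε) (hli : LinearIndependent R v) :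
    Fintype.card ι ≤ Fintype.card σ := by
  let evalGenerators : Module.Dual R A →ₗ[R] σ → R :=
    LinearMap.pi fun i ↦ Module.Dual.eval R A (x i)
  have hinj : Set.InjOn evalGenerators (Submodule.span R (Set.range v)) := by
    rw [← LinearMap.disjoint_ker_iff_injOn, LinearMap.disjoint_ker]
    intro D hD hDx
    have hDε : D ∈ tangentSpace ε := Submodule.span_le.2 (Set.range_subset_iff.2 hv) hD
    exact eq_zero_of_mem_tangentSpace hx hDε (Set.forall_mem_range.2 (congrFun hDx))
  simpa using (hli.map_injOn evalGenerators hinj).fintype_card_le_finrank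

end TangentSpace

theorem nonempty_embedding_of_algHom_injective {R σ τ : Type*} [CommRing R] [IsDomain R]
    {φ : MvPolynomial σ R →ₐ[R] MvPolynomial τ R} (hφ : Function.Injective φ) :
    Nonempty (σ ↪ τ) := by
  have htrdeg := lift_trdeg_le_of_injective φ hφ
  simp only [MvPolynomial.trdeg_of_isDomain, Cardinal.lift_lift] at htrdeg
  rw [← Cardinal.lift_mk_le']
  exact Cardinal.lift_le.1 (by simpa using htrdeg)

theorem adjoin_range_X_of_algHom_surjective {R A σ : Type*} [CommSemiring R] [Semiring A]
    [Algebra R A] {φ : MvPolynomial σ R →ₐ[R] A} (hφ : Function.Surjective φ) :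
    Algebra.adjoin R (Set.range fun i ↦ φ (X i)) = ⊤ := by
  calc Algebra.adjoin R (Set.range fun i ↦ φ (X i))
      = (Algebra.adjoin R (Set.range X)).map φ := by
        rw [AlgHom.map_adjoin, ← Set.range_comp, Function.comp_def]
    _ = ⊤ := by rw [adjoin_range_X, Algebra.map_top, (AlgHom.range_eq_top φ).2 hφ]

theorem multiset_toFinsupp_map {σ τ : Type*} [DecidableEq σ] [DecidableEq τ] (f : σ → τ)
    (s : Multiset σ) :
    (s.map f).toFinsupp = s.toFinsupp.mapDomain f := by
  rw [Multiset.toFinsupp_eq_iff, ← Finsupp.toMultiset_map, Multiset.toFinsupp_toMultiset]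

section MultisetCoeff

variable {R σ : Type*} [CommSemiring R] [DecidableEq σ]

/-- The coefficient of the monomial `∏ i ∈ s, X i`. Indexing monomials by multisets of variables
makes the factorizations of a given monomial computable. -/
noncomputable def multisetCoeff (s : Multiset σ) : MvPolynomial σ R →ₗ[R] R :=
  lcoeff R s.toFinsupp

theorem multisetCoeff_apply (s : Multiset σ) (f : MvPolynomial σ R) :
    multisetCoeff s f = coeff s.toFinsupp f :=
  rfl

theorem multisetCoeff_mul (s : Multiset σ) (f g : MvPolynomial σ R) :
    multisetCoeff s (f * g) =
      ∑ p ∈ s.antidiagonal.toFinset, multisetCoeff p.1 f * multisetCoeff p.2 g := by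
  refine (coeff_mul f g _).trans (Finset.sum_nbij' (fun p ↦ (p.1.toMultiset, p.2.toMultiset))
    (fun p ↦ (p.1.toFinsupp, p.2.toFinsupp)) ?_ ?_ ?_ ?_ ?_)
  · rintro p hp
    rw [Finset.HasAntidiagonal.mem_antidiagonal] at hp
    simp [← map_add, hp]
  · rintro p hp
    rw [Multiset.mem_toFinset, Multiset.mem_antidiagonal] at hp
    simp [← Multiset.toFinsupp_add, hp]
  all_goals simp [multisetCoeff_apply]

variable {i j k : σ} (f g : MvPolynomial σ R)

local notation "c" => multisetCoeff

theorem multisetCoeff_singleton_mul (i : σ) :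
    c {i} (f * g) = c {i} f * c 0 g + c 0 f * c {i} g := by
  simp [multisetCoeff_mul, ← Multiset.cons_zero]

theorem multisetCoeff_sq_mul (i : σ) :
    c {i, i} (f * g) = c {i, i} f * c 0 g + c {i} f * c {i} g + c 0 f * c {i, i} g := by
  simp [multisetCoeff_mul, ← Multiset.cons_zero, Multiset.insert_eq_cons, add_assoc]

theorem multisetCoeff_pair_mul (hij : i ≠ j) :
    c {i, j} (f * g) =
      c {i, j} f * c 0 g + c {i} f * c {j} g + c {j} f * c {i} g + c 0 f * c {i, j} g := by
  simp [multisetCoeff_mul, ← Multiset.cons_zero, Multiset.insert_eq_cons, hij, add_assoc]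

theorem multisetCoeff_cube_mul (i : σ) :
    c {i, i, i} (f * g) =
      c {i, i, i} f * c 0 g + c {i, i} f * c {i} g + c {i} f * c {i, i} g +
        c 0 f * c {i, i, i} g := by
  simp [multisetCoeff_mul, ← Multiset.cons_zero, Multiset.insert_eq_cons, add_assoc]

theorem multisetCoeff_sq_pair_mul (hij : i ≠ j) :
    c {i, i, j} (f * g) =
      c {i, i, j} f * c 0 g + c {i, i} f * c {j} g + c {i, j} f * c {i} g +
        c {i} f * c {i, j} g + c {j} f * c {i, i} g + c 0 f * c {i, i, j} g := by
  simp [multisetCoeff_mul, ← Multiset.cons_zero, Multiset.insert_eq_cons, Multiset.cons_eq_cons,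
    hij, hij.symm, add_assoc]

theorem multisetCoeff_triple_mul (hij : i ≠ j) (hjk : j ≠ k) (hik : i ≠ k) :
    c {i, j, k} (f * g) =
      c {i, j, k} f * c 0 g + c {i, j} f * c {k} g + c {i, k} f * c {j} g + c {i} f * c {j, k} g +
        c {j, k} f * c {i} g + c {j} f * c {i, k} g + c {k} f * c {i, j} g +
          c 0 f * c {i, j, k} g := by
  simp [multisetCoeff_mul, ← Multiset.cons_zero, Multiset.insert_eq_cons, Multiset.cons_eq_cons,
    hij, hij.symm, hjk, hjk.symm, hik, hik.symm, add_assoc]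

end MultisetCoeff

section PermInvariants

variable {R σ : Type*} [CommRing R] {e : Equiv.Perm σ}

variable (R) in
/-- The ring of polynomials over `R` that are invariant under the permutation `e` of the
variables. -/
noncomputable abbrev permInvariants (e : Equiv.Perm σ) : Subalgebra R (MvPolynomial σ R) :=
  AlgHom.equalizer (rename e) (AlgHom.id R (MvPolynomial σ R))

variable (R) in
/-- The origin, as an `R`-point of the ring of invariants. -/
noncomputable def evalZero (e : Equiv.Perm σ) : permInvariants R e →ₐ[R] R :=
  (aeval 0).comp (permInvariants R e).val

variable [DecidableEq σ]

variable (R) in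
/-- The coefficient functional `multisetCoeff s`, restricted to the invariants of `e`. -/
noncomputable def invariantCoeff (e : Equiv.Perm σ) (s : Multiset σ) :
    Module.Dual R (permInvariants R e) :=
  multisetCoeff s ∘ₗ (permInvariants R e).val.toLinearMap

theorem invariantCoeff_apply (s : Multiset σ) (f : permInvariants R e) :
    invariantCoeff R e s f = multisetCoeff s (f : MvPolynomial σ R) :=
  rfl

theorem evalZero_apply (f : permInvariants R e) :
    evalZero R e f = multisetCoeff 0 (f : MvPolynomial σ R) := by
  simp [evalZero, multisetCoeff_apply, constantCoeff_eq]

theorem invariantCoeff_map (s : Multiset σ) :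
    invariantCoeff R e (s.map e) = invariantCoeff R e s := by
  ext f
  have hf : rename e (f : MvPolynomial σ R) = f := f.2
  rw [invariantCoeff_apply, multisetCoeff_apply, multiset_toFinsupp_map, ← hf,
    coeff_rename_mapDomain _ e.injective, invariantCoeff_apply, multisetCoeff_apply]

theorem invariantCoeff_map_zpow (n : ℤ) (s : Multiset σ) :
    invariantCoeff R e (s.map (e ^ n : Equiv.Perm σ)) = invariantCoeff R e s := by
  induction n with
  | zero => simp
  | succ n ih =>
    rw [add_comm, zpow_one_add, Equiv.Perm.coe_mul, ← Multiset.map_map, invariantCoeff_map, ih]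
  | pred n ih =>
    rw [← invariantCoeff_map (s.map _), Multiset.map_map, ← Equiv.Perm.coe_mul, ← zpow_one_add,
      add_sub_cancel, ih]

theorem invariantCoeff_replicate_congr {i j : σ} (hij : e.SameCycle i j) (n : ℕ) :
    invariantCoeff R e (.replicate n i) = invariantCoeff R e (.replicate n j) := by
  obtain ⟨m, rfl⟩ := hij
  rw [← invariantCoeff_map_zpow m, Multiset.map_replicate]

theorem multisetCoeff_singleton_congr {i j : σ} (hij : e.SameCycle i j) (f : permInvariants R e) :
    multisetCoeff {i} (f : MvPolynomial σ R) = multisetCoeff {j} (f : MvPolynomial σ R) :=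
  LinearMap.congr_fun (invariantCoeff_replicate_congr hij 1) f

theorem multisetCoeff_sq_congr {i j : σ} (hij : e.SameCycle i j) (f : permInvariants R e) :
    multisetCoeff {i, i} (f : MvPolynomial σ R) = multisetCoeff {j, j} (f : MvPolynomial σ R) :=
  LinearMap.congr_fun (invariantCoeff_replicate_congr hij 2) f

variable (R e) in
theorem invariantCoeff_singleton_mem_tangentSpace (i : σ) :
    invariantCoeff R e {i} ∈ tangentSpace (evalZero R e) := by
  intro f g
  simp only [invariantCoeff_apply, evalZero_apply, MulMemClass.coe_mul, multisetCoeff_singleton_mul]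
  ring

variable {i j k : σ}

theorem invariantCoeff_pair_sub_mem_tangentSpace (hne : i ≠ j) (hij : e.SameCycle i j) :
    invariantCoeff R e {i, j} - 2 • invariantCoeff R e {i, i} ∈ tangentSpace (evalZero R e) := by
  intro f g
  simp only [LinearMap.sub_apply, LinearMap.smul_apply, invariantCoeff_apply, evalZero_apply,
    MulMemClass.coe_mul, multisetCoeff_pair_mul _ _ hne, multisetCoeff_sq_mul,
    ← multisetCoeff_singleton_congr hij]
  ring

theorem invariantCoeff_sq_pair_sub_mem_tangentSpace (hne : i ≠ j) (hij : e.SameCycle i j) :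
    invariantCoeff R e {i, i, j} - invariantCoeff R e {j, j, i} ∈ tangentSpace (evalZero R e) := by
  intro f g
  simp only [LinearMap.sub_apply, invariantCoeff_apply, evalZero_apply, MulMemClass.coe_mul,
    multisetCoeff_sq_pair_mul _ _ hne, multisetCoeff_sq_pair_mul _ _ hne.symm,
    ← multisetCoeff_singleton_congr hij, ← multisetCoeff_sq_congr hij]
  rw [Multiset.pair_comm j i]
  ring

theorem invariantCoeff_triple_sub_mem_tangentSpace (hne_ij : i ≠ j) (hne_jk : j ≠ k)
    (hne_ik : i ≠ k) (hij : e.SameCycle i j) (hik : e.SameCycle i k) :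
    invariantCoeff R e {i, j, k} - (invariantCoeff R e {i, i, j} + invariantCoeff R e {j, j, k} +
      invariantCoeff R e {k, k, i}) + 3 • invariantCoeff R e {i, i, i} ∈
        tangentSpace (evalZero R e) := by
  intro f g
  simp only [LinearMap.sub_apply, LinearMap.add_apply, LinearMap.smul_apply, invariantCoeff_apply,
    evalZero_apply, MulMemClass.coe_mul, multisetCoeff_triple_mul _ _ hne_ij hne_jk hne_ik,
    multisetCoeff_sq_pair_mul _ _ hne_ij, multisetCoeff_sq_pair_mul _ _ hne_jk,
    multisetCoeff_sq_pair_mul _ _ hne_ik.symm, multisetCoeff_cube_mul,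
    ← multisetCoeff_singleton_congr hij, ← multisetCoeff_singleton_congr hik,
    ← multisetCoeff_sq_congr hij, ← multisetCoeff_sq_congr hik]
  rw [Multiset.pair_comm k i]
  ring

variable (R) in
/-- The invariant `∑ s ∈ T, ∏ i ∈ s, X i` attached to a finite set `T` of monomials, encoded as
multisets of variables, that is stable under `e`. -/
noncomputable def monomialSum (T : Finset (Multiset σ)) (hT : T.image (Multiset.map e) = T) :
    permInvariants R e :=
  ⟨∑ s ∈ T, monomial s.toFinsupp 1, by
    rw [AlgHom.mem_equalizer, AlgHom.id_apply, map_sum]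
    conv_rhs => rw [← hT, Finset.sum_image (Multiset.map_injective e.injective).injOn]
    simp only [rename_monomial, multiset_toFinsupp_map]⟩

theorem invariantCoeff_monomialSum (s : Multiset σ) (T : Finset (Multiset σ))
    (hT : T.image (Multiset.map e) = T) :
    invariantCoeff R e s (monomialSum R T hT) = if s ∈ T then 1 else 0 := by
  simp [invariantCoeff_apply, multisetCoeff_apply, monomialSum, coeff_monomial]

end PermInvariants

section Cyclic

variable (R : Type*) [CommRing R]

/-- Four tangent vectors at the origin of the ring of invariants of a three-cycle: the leading
coefficients are corrected by others so that the products of lower-degree coefficients arising from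
a product of two invariants cancel. -/
noncomputable def cyclicTangentVector : Fin 4 → Module.Dual R (permInvariants R (finRotate 3)) :=
  let c := invariantCoeff R (finRotate 3)
  ![c {0}, c {0, 1} - 2 • c {0, 0}, c {0, 0, 2} - c {2, 2, 0},
    c {0, 1, 2} - (c {0, 0, 1} + c {1, 1, 2} + c {2, 2, 0}) + 3 • c {0, 0, 0}]

theorem cyclicTangentVector_mem_tangentSpace (i : Fin 4) :
    cyclicTangentVector R i ∈ tangentSpace (evalZero R (finRotate 3)) := by
  have hcycle (i j : Fin 3) : (finRotate 3).SameCycle i j :=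
    isCycle_finRotate.sameCycle (by decide +revert) (by decide +revert)
  fin_cases i
  · exact invariantCoeff_singleton_mem_tangentSpace R _ 0
  · exact invariantCoeff_pair_sub_mem_tangentSpace (by decide) (hcycle 0 1)
  · exact invariantCoeff_sq_pair_sub_mem_tangentSpace (by decide) (hcycle 0 2)
  · exact invariantCoeff_triple_sub_mem_tangentSpace (by decide) (by decide) (by decide)
      (hcycle 0 1) (hcycle 0 2)

/-- The orbits under the three-cycle of the monomials `x₀`, `x₀x₁`, `x₀²x₂` and `x₀x₁x₂`. Their
orbit sums are dual to `cyclicTangentVector`. -/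
def cyclicOrbit : Fin 4 → Finset (Multiset (Fin 3)) :=
  ![{{0}, {1}, {2}}, {{0, 1}, {1, 2}, {2, 0}}, {{0, 0, 2}, {1, 1, 0}, {2, 2, 1}}, {{0, 1, 2}}]

theorem image_cyclicOrbit (i : Fin 4) :
    (cyclicOrbit i).image (Multiset.map (finRotate 3)) = cyclicOrbit i := by
  decide +revert

theorem cyclicTangentVector_monomialSum (i j : Fin 4) :
    cyclicTangentVector R i (monomialSum R (cyclicOrbit j) (image_cyclicOrbit j)) =
      if i = j then 1 else 0 := by
  fin_cases i <;> fin_cases j <;>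
    simp +decide [cyclicTangentVector, invariantCoeff_monomialSum, cyclicOrbit]

theorem linearIndependent_cyclicTangentVector : LinearIndependent R (cyclicTangentVector R) :=
  .of_pairwise_dual_eq_zero_one _
    (fun j ↦ Module.Dual.eval R _ (monomialSum R (cyclicOrbit j) (image_cyclicOrbit j)))
    (fun j i hij ↦ by simp [cyclicTangentVector_monomialSum, hij.symm])
    (fun i ↦ by simp [cyclicTangentVector_monomialSum])

end Cyclic

theorem cyclic_invariants_not_polynomial_general (R σ : Type*) [CommRing R] [IsDomain R] :
    IsEmpty (permInvariants R (finRotate 3) ≃ₐ[R] MvPolynomial σ R) := by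
  refine ⟨fun e ↦ ?_⟩
  have hinj : Function.Injective ((permInvariants R (finRotate 3)).val.comp e.symm.toAlgHom) :=
    Subtype.val_injective.comp e.symm.injective
  obtain ⟨ι⟩ : Nonempty (σ ↪ Fin 3) := nonempty_embedding_of_algHom_injective hinj
  have : Fintype σ := .ofInjective ι ι.injective
  have hle : Fintype.card σ ≤ 3 := by simpa using Fintype.card_le_of_embedding ι
  have hge : 4 ≤ Fintype.card σ := by
    have hgen := adjoin_range_X_of_algHom_surjective (φ := e.symm.toAlgHom) e.symm.surjective
    simpa using card_le_card_of_linearIndependent_tangentSpace hgen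
      (cyclicTangentVector_mem_tangentSpace R) (linearIndependent_cyclicTangentVector R)
  lia

/-- Let `σ` be the `ℚ`-algebra automorphism of `ℚ[x₁,x₂,x₃]` cyclically
permuting the variables (`x₁ ↦ x₂ ↦ x₃ ↦ x₁`), generating an action of `ℤ/3`.  The ring of
invariants (the fixed subalgebra of `σ`) is not a polynomial ring: it is not isomorphic as
a `ℚ`-algebra to `ℚ[y₁,…,y_m]` for any `m`. -/
theorem cyclic_invariants_not_polynomial :
    ¬ ∃ m : ℕ, Nonempty
      ((AlgHom.equalizer
          (MvPolynomial.rename (R := ℚ) ⇑(finRotate 3))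
          (AlgHom.id ℚ (MvPolynomial (Fin 3) ℚ))) ≃ₐ[ℚ] MvPolynomial (Fin m) ℚ) := by
  rintro ⟨m, ⟨e⟩⟩
  exact (cyclic_invariants_not_polynomial_general ℚ (Fin m)).false e
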